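/- For a metric space X and integer m ≥ 0 the following are equivalent: (a) S^m is a Lipschitz extensor of X; (b) there is t > 0 such that every cover U = {U_0,…,U_{m+1}} of X by m+2 subsets admits a refinement V (a cover of X) with Lebesgue number L(V) ≥ t·L(U) and multiplicity of V at most m+1. -/

import Mathlib

/-- A metric space `E` is a Lipschitz extensor of `X`. -/
def LipschitzExtensorOf (X E : Type*) [MetricSpace X] [MetricSpace E] : Prop :=
  ∃ C : ℝ, 0 < C ∧ ∀ A : Set X, A.Nonempty → ∀ lam : ℝ, 0 < lam →
    ∀ f : A → E, (∀ a b : A, dist (f a) (f b) ≤ lam * dist (a : X) (b : X)) →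
      ∃ g : X → E, (∀ a : A, g a = f a) ∧
        ∀ x y : X, dist (g x) (g y) ≤ C * lam * dist x y

/-- The multiplicity of a family `V` of subsets of `X` is at most `m`: for every point `x`,
the number of members `W` of `V` with `dist (x, X \ W) > 0` (equivalently `x ∈ interior W`)
is at most `m`. -/
def MultiplicityLE {X : Type*} [MetricSpace X] (V : Set (Set X)) (m : ℕ) : Prop :=
  ∀ x : X, {W | W ∈ V ∧ x ∈ interior W}.Finite ∧ {W | W ∈ V ∧ x ∈ interior W}.ncard ≤ m

/-!
The unit sphere of an `(m + 1)`-dimensional normed space is bi-Lipschitz, by radial projection, to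
the part of the unit sphere of `ℝ^(m + 2)` (supremum norm) on which all coordinates are nonnegative
and one of them vanishes: `ℝ^(m + 1)` is the quotient of `ℝ^(m + 2)` by the diagonal, and
subtracting the least coordinate picks a representative. A map into this model assigns to each
point a tuple of coordinates `φ i`, and the sets `{φ i > 0}` form a cover without common point,
hence of multiplicity at most `m + 1`; conversely the truncated distances to the complements of the
members of such a cover define a map into the model.

If the sphere is a Lipschitz extensor, take the truncated distance functions of an `r`-Lebesgue
cover `U` and restrict this map to the set where it lands in the model, that is, to the complement
of the common intersection of `U`. The supports of the coordinates of an extension shrink `U`.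

For the converse, let `f : A → S` be Lipschitz. Extending the coordinates one by one and subtracting
the minimum keeps everything in the boundary of the orthant, but the extension `φ` may vanish away
from `A`. Near `A` it does not, so there the sets `{φ i > 0}` form a cover; enlarge each of them by
the complement of a neighbourhood of `A`. The map defined by a thin refinement of this cover of `X`
is nowhere zero, and at each point near `A` it vanishes in a coordinate where `φ` does, so it can be
glued to `φ` without leaving the boundary of the orthant. Finally normalize.
-/

open Set Metric NormedSpace
open scoped NNReal

section Extensors

variable {X E F : Type*} [MetricSpace X] [MetricSpace E] [MetricSpace F]

theorem lipschitzExtensorOf_coe_iff {S : Set E} :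
    LipschitzExtensorOf X S ↔ ∃ C : ℝ≥0, 0 < C ∧ ∀ A : Set X, A.Nonempty → ∀ K : ℝ≥0, 0 < K →
      ∀ f : X → E, LipschitzOnWith K f A → MapsTo f A S →
        ∃ g : X → E, LipschitzWith (C * K) g ∧ (∀ x, g x ∈ S) ∧ EqOn g f A := by
  constructor
  · rintro ⟨C, hC, H⟩
    lift C to ℝ≥0 using hC.le
    refine ⟨C, mod_cast hC, fun A hA K hK f hf hfS => ?_⟩
    obtain ⟨g, hgf, hg⟩ := H A hA K (mod_cast hK) (fun a => ⟨f a, hfS a.2⟩)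
      fun a b => hf.dist_le_mul a a.2 b b.2
    exact ⟨fun x => g x, LipschitzWith.of_dist_le_mul hg, fun x => (g x).2,
      fun a ha => congrArg Subtype.val (hgf ⟨a, ha⟩)⟩
  · rintro ⟨C, hC, H⟩
    refine ⟨C, mod_cast hC, fun A hA K hK f hf => ?_⟩
    lift K to ℝ≥0 using hK.le
    let f' : X → E := Function.extend Subtype.val (fun a => (f a : E)) fun _ => f ⟨_, hA.some_mem⟩
    have hf' (a : A) : f' a = f a := Subtype.val_injective.extend_apply _ _ a
    obtain ⟨g, hg, hgS, hgf⟩ := H A hA K (mod_cast hK) f'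
      (LipschitzOnWith.of_dist_le_mul fun x hx y hy => by
        simpa only [hf' ⟨x, hx⟩, hf' ⟨y, hy⟩, Subtype.dist_eq] using hf ⟨x, hx⟩ ⟨y, hy⟩)
      fun x hx => hf' ⟨x, hx⟩ ▸ (f ⟨x, hx⟩).2
    exact ⟨fun x => ⟨g x, hgS x⟩, fun a => Subtype.ext ((hgf a.2).trans (hf' a)),
      fun x y => mod_cast hg.dist_le_mul x y⟩

theorem LipschitzExtensorOf.of_leftInvOn {S : Set E} {T : Set F} {e : E → F} {p : F → E}
    {K L : ℝ≥0} (hT : LipschitzExtensorOf X T) (he : LipschitzOnWith K e S) (heS : MapsTo e S T)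
    (hp : LipschitzOnWith L p T) (hpT : MapsTo p T S) (hpe : LeftInvOn p e S) :
    LipschitzExtensorOf X S := by
  rw [lipschitzExtensorOf_coe_iff] at hT ⊢
  obtain ⟨C, hC, H⟩ := hT
  refine ⟨(L + 1) * C * (K + 1), by positivity, fun A hA M hM f hf hfS => ?_⟩
  have hef : LipschitzOnWith ((K + 1) * M) (e ∘ f) A :=
    (he.comp hf hfS).weaken (by gcongr; exact le_self_add)
  obtain ⟨g, hg, hgT, hgf⟩ := H A hA ((K + 1) * M) (by positivity) (e ∘ f) hef (heS.comp hfS)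
  have hpg : LipschitzWith (L * (C * ((K + 1) * M))) (p ∘ g) :=
    lipschitzOnWith_univ.1 (hp.comp hg.lipschitzOnWith fun x _ => hgT x)
  refine ⟨p ∘ g, hpg.weaken ?_, fun x => hpT (hgT x), fun a ha => ?_⟩
  · rw [mul_assoc, mul_assoc]
    gcongr
    exact le_self_add
  · simp only [Function.comp_apply, hgf ha, hpe (hfS ha)]

end Extensors

section Normalize

variable {X E F : Type*} [PseudoMetricSpace X] [NormedAddCommGroup E] [NormedSpace ℝ E]
  [NormedAddCommGroup F] [NormedSpace ℝ F]

theorem norm_mul_norm_normalize_sub_normalize_le (v w : E) :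
    ‖v‖ * ‖normalize v - normalize w‖ ≤ 2 * ‖v - w‖ := by
  have hw : ‖normalize w‖ ≤ 1 := by
    rcases eq_or_ne w 0 with rfl | hw
    · simp
    · exact (norm_normalize_eq_one_iff.2 hw).le
  have hsplit : ‖v‖ • (normalize v - normalize w) = (v - w) + (‖w‖ - ‖v‖) • normalize w := by
    rw [smul_sub, sub_smul, norm_smul_normalize, norm_smul_normalize]
    abel
  calc ‖v‖ * ‖normalize v - normalize w‖ = ‖(v - w) + (‖w‖ - ‖v‖) • normalize w‖ := by
        rw [← hsplit, norm_smul, norm_norm]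
    _ ≤ ‖v - w‖ + |‖w‖ - ‖v‖| * ‖normalize w‖ := by
        rw [← Real.norm_eq_abs, ← norm_smul]
        exact norm_add_le _ _
    _ ≤ ‖v - w‖ + ‖v - w‖ * 1 := by
        gcongr
        rw [norm_sub_rev v w]
        exact abs_norm_sub_norm_le w v
    _ = 2 * ‖v - w‖ := by ring

theorem lipschitzOnWith_normalize_comp {f : X → E} {s : Set X} {K M : ℝ≥0}
    (hf : LipschitzOnWith K f s) (hM : ∀ x ∈ s, 1 ≤ M * ‖f x‖) :
    LipschitzOnWith (2 * M * K) (fun x => normalize (f x)) s := by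
  refine LipschitzOnWith.of_dist_le_mul fun x hx y hy => ?_
  have hfxy : ‖f x - f y‖ ≤ K * dist x y := dist_eq_norm (f x) (f y) ▸ hf.dist_le_mul x hx y hy
  rw [dist_eq_norm]
  calc ‖normalize (f x) - normalize (f y)‖
      ≤ M * ‖f x‖ * ‖normalize (f x) - normalize (f y)‖ :=
        le_mul_of_one_le_left (norm_nonneg _) (hM x hx)
    _ = M * (‖f x‖ * ‖normalize (f x) - normalize (f y)‖) := mul_assoc _ _ _
    _ ≤ M * (2 * ‖f x - f y‖) :=
        mul_le_mul_of_nonneg_left (norm_mul_norm_normalize_sub_normalize_le _ _) M.coe_nonneg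
    _ ≤ M * (2 * (K * dist x y)) := by gcongr
    _ = ↑(2 * M * K) * dist x y := by push_cast; ring

/-- A Lipschitz, positively homogeneous map `E → F` carrying `P` into `Q`, where `P` and `Q` are
typically cones. Homogeneity is required on all of `E`. -/
structure IsConeMap (K : ℝ≥0) (T : E → F) (P : Set E) (Q : Set F) : Prop where
  lipschitzWith : LipschitzWith K T
  map_pos_smul : ∀ c : ℝ, 0 < c → ∀ v, T (c • v) = c • T v
  mapsTo : MapsTo T P Q

namespace IsConeMap

variable {P : Set E} {Q : Set F} {T : E → F} {S : F → E} {K L : ℝ≥0}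

theorem norm_le_mul (hT : IsConeMap K T P Q) (v : E) : ‖T v‖ ≤ K * ‖v‖ := by
  refine hT.lipschitzWith.norm_le_mul ?_ v
  have h2 := hT.map_pos_smul 2 two_pos 0
  rwa [smul_zero, two_smul, left_eq_add] at h2

theorem one_le_mul_norm (hS : IsConeMap L S Q P) (hinv : LeftInvOn S T P) {v : E}
    (hv : v ∈ P ∩ sphere 0 1) : 1 ≤ L * ‖T v‖ := by
  simpa [hinv hv.1, mem_sphere_zero_iff_norm.1 hv.2] using hS.norm_le_mul (T v)

theorem apply_ne_zero (hS : IsConeMap L S Q P) (hinv : LeftInvOn S T P) {v : E}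
    (hv : v ∈ P ∩ sphere 0 1) : T v ≠ 0 := by
  intro h0
  simpa [h0, zero_lt_one.not_ge] using hS.one_le_mul_norm hinv hv

theorem mapsTo_normalize (hT : IsConeMap K T P Q) (hS : IsConeMap L S Q P)
    (hinv : LeftInvOn S T P) (hQ : ∀ c : ℝ, 0 < c → ∀ w ∈ Q, c • w ∈ Q) :
    MapsTo (fun v => normalize (T v)) (P ∩ sphere 0 1) (Q ∩ sphere 0 1) := by
  intro v hv
  have h0 : T v ≠ 0 := hS.apply_ne_zero hinv hv
  exact ⟨hQ _ (by positivity) _ (hT.mapsTo hv.1),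
    mem_sphere_zero_iff_norm.2 (norm_normalize_eq_one_iff.2 h0)⟩

theorem leftInvOn_normalize (hS : IsConeMap L S Q P) (hinv : LeftInvOn S T P) :
    LeftInvOn (fun w => normalize (S w)) (fun v => normalize (T v)) (P ∩ sphere 0 1) := by
  intro v hv
  have h0 : 0 < ‖T v‖⁻¹ := by have := hS.apply_ne_zero hinv hv; positivity
  change normalize (S (‖T v‖⁻¹ • T v)) = v
  rw [hS.map_pos_smul _ h0, hinv hv.1, normalize_smul_of_pos h0,
    normalize_eq_self_of_norm_eq_one (mem_sphere_zero_iff_norm.1 hv.2)]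

theorem lipschitzExtensorOf_inter_sphere {X : Type*} [MetricSpace X]
    (hT : IsConeMap K T P Q) (hS : IsConeMap L S Q P) (hinv : InvOn S T P Q)
    (hP : ∀ c : ℝ, 0 < c → ∀ v ∈ P, c • v ∈ P)
    (hQ : ∀ c : ℝ, 0 < c → ∀ w ∈ Q, c • w ∈ Q)
    (h : LipschitzExtensorOf X ↥(Q ∩ sphere 0 1)) : LipschitzExtensorOf X ↥(P ∩ sphere 0 1) :=
  h.of_leftInvOn
    (lipschitzOnWith_normalize_comp hT.lipschitzWith.lipschitzOnWith
      fun _ hv => hS.one_le_mul_norm hinv.1 hv)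
    (hT.mapsTo_normalize hS hinv.1 hQ)
    (lipschitzOnWith_normalize_comp hS.lipschitzWith.lipschitzOnWith
      fun _ hw => hT.one_le_mul_norm hinv.2 hw)
    (hS.mapsTo_normalize hT hinv.2 hP)
    (hS.leftInvOn_normalize hinv.1)

end IsConeMap

end Normalize

section Orthant

variable {X ι : Type*} [PseudoMetricSpace X]

theorem lipschitzWith_pi [Fintype ι] {K : ℝ≥0} {f : X → ι → ℝ}
    (hf : ∀ i, LipschitzWith K fun x => f x i) : LipschitzWith K f :=
  fun x y => edist_pi_le_iff.2 fun i => hf i x y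

theorem apply_le_pi_norm [Fintype ι] (v : ι → ℝ) (i : ι) : v i ≤ ‖v‖ :=
  (le_abs_self _).trans (norm_le_pi_norm v i)

theorem exists_apply_eq_norm_of_nonneg [Fintype ι] [Nonempty ι] {v : ι → ℝ} (hv : 0 ≤ v) :
    ∃ i, v i = ‖v‖ := by
  obtain ⟨i, hi⟩ := Finite.exists_max v
  refine ⟨i, le_antisymm (apply_le_pi_norm v i) ?_⟩
  exact (pi_norm_le_iff_of_nonneg (hv i)).2 fun j => (Real.norm_of_nonneg (hv j)).trans_le (hi j)

theorem apply_sub_apply_le_of_lipschitzWith [Fintype ι] {K : ℝ≥0} {f : X → ι → ℝ}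
    (hf : LipschitzWith K f) (x y : X) (i : ι) : f x i - f y i ≤ K * dist x y :=
  (le_abs_self _).trans ((dist_le_pi_dist (f x) (f y) i).trans (hf.dist_le_mul x y))

/-- The boundary of the orthant `[0, ∞)^ι`. It meets every line parallel to the diagonal in
exactly one point, so it is a model of the quotient of `ι → ℝ` by the constants. -/
def orthantBoundary (ι : Type*) : Set (ι → ℝ) := {v | 0 ≤ v ∧ ∃ i, v i = 0}

/-- The part of the unit sphere of the supremum norm lying on the boundary of the orthant: a
polyhedral sphere of dimension `|ι| - 2`. -/
def orthantSphere (ι : Type*) [Fintype ι] : Set (ι → ℝ) := orthantBoundary ι ∩ sphere 0 1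

theorem smul_mem_orthantBoundary {c : ℝ} (hc : 0 < c) {v : ι → ℝ} (hv : v ∈ orthantBoundary ι) :
    c • v ∈ orthantBoundary ι := by
  obtain ⟨hv0, i, hi⟩ := hv
  exact ⟨smul_nonneg hc.le hv0, i, by simp [hi]⟩

theorem normalize_mem_orthantSphere [Fintype ι] {v : ι → ℝ} (hv : v ∈ orthantBoundary ι)
    (hv0 : v ≠ 0) : normalize v ∈ orthantSphere ι :=
  ⟨smul_mem_orthantBoundary (by positivity) hv,
    mem_sphere_zero_iff_norm.2 (norm_normalize_eq_one_iff.2 hv0)⟩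

theorem orthantSphere_nonempty [Fintype ι] [Nontrivial ι] : (orthantSphere ι).Nonempty := by
  classical
  obtain ⟨i, j, hij⟩ := exists_pair_ne ι
  exact ⟨Pi.single i 1, ⟨Pi.single_nonneg.2 zero_le_one, j, Pi.single_eq_of_ne hij.symm 1⟩,
    by simp [Pi.norm_single]⟩

/-- The projection onto `orthantBoundary ι` along the constants: subtract the least coordinate. -/
noncomputable def subMin (v : ι → ℝ) : ι → ℝ := fun i => v i - ⨅ j, v j

section SubMin

theorem subMin_smul {c : ℝ} (hc : 0 ≤ c) (v : ι → ℝ) : subMin (c • v) = c • subMin v := by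
  funext i
  simp [subMin, Real.mul_iInf_of_nonneg hc, mul_sub]

variable [Finite ι] [Nonempty ι]

theorem subMin_mem_orthantBoundary (v : ι → ℝ) : subMin v ∈ orthantBoundary ι := by
  obtain ⟨i, hi⟩ := exists_eq_ciInf_of_finite (f := v)
  exact ⟨fun j => sub_nonneg.2 (ciInf_le (finite_range v).bddBelow j), i, sub_eq_zero.2 hi⟩

theorem subMin_of_mem_orthantBoundary {v : ι → ℝ} (hv : v ∈ orthantBoundary ι) :
    subMin v = v := by
  obtain ⟨hv0, i, hi⟩ := hv
  have hmin : ⨅ j, v j = 0 :=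
    le_antisymm (hi ▸ ciInf_le (finite_range v).bddBelow i) (le_ciInf hv0)
  funext j
  simp [subMin, hmin]

theorem subMin_sub_const (v : ι → ℝ) (c : ℝ) : subMin (fun i => v i - c) = subMin v := by
  funext i
  simp [subMin, ← ciInf_sub (finite_range v).bddBelow]

end SubMin

variable [Fintype ι] [Nonempty ι]

theorem lipschitzWith_iInf_apply : LipschitzWith 1 fun v : ι → ℝ => ⨅ i, v i :=
  LipschitzWith.of_le_add fun v w => sub_le_iff_le_add.1 <| le_ciInf fun i =>
    sub_le_iff_le_add.2 <| (ciInf_le (finite_range v).bddBelow i).trans <|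
      sub_le_iff_le_add'.1 <| by
        simpa using apply_sub_apply_le_of_lipschitzWith LipschitzWith.id v w i

theorem lipschitzWith_subMin : LipschitzWith 2 (subMin : (ι → ℝ) → ι → ℝ) :=
  lipschitzWith_pi fun i =>
    ((LipschitzWith.eval i).sub lipschitzWith_iInf_apply).weaken one_add_one_eq_two.le

theorem exists_lipschitzWith_extension_orthantBoundary {A : Set X} {f : X → ι → ℝ} {K : ℝ≥0}
    (hf : LipschitzOnWith K f A) (hfA : MapsTo f A (orthantBoundary ι)) :
    ∃ g : X → ι → ℝ, LipschitzWith (2 * K) g ∧ (∀ x, g x ∈ orthantBoundary ι) ∧ EqOn g f A := by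
  obtain ⟨g, hg, hgf⟩ := hf.extend_pi
  refine ⟨subMin ∘ g, lipschitzWith_subMin.comp hg, fun x => subMin_mem_orthantBoundary _,
    fun a ha => ?_⟩
  rw [Function.comp_apply, ← hgf ha, subMin_of_mem_orthantBoundary (hfA ha)]

end Orthant

section OrthantSphere

variable {X E : Type*} [MetricSpace X] [NormedAddCommGroup E] [NormedSpace ℝ E] {n : ℕ}

/-- The linear map `v ↦ (v 1 - v 0, …, v n - v 0)`, whose kernel is the diagonal. -/
def diffZero (n : ℕ) : (Fin (n + 1) → ℝ) →L[ℝ] (Fin n → ℝ) :=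
  .pi fun j => .proj j.succ - .proj 0

/-- The linear map `v ↦ (0, v 1, …, v n)`, a section of `diffZero n`. -/
def consZero (n : ℕ) : (Fin n → ℝ) →L[ℝ] (Fin (n + 1) → ℝ) :=
  .pi (Fin.cons 0 .proj)

theorem consZero_diffZero (v : Fin (n + 1) → ℝ) :
    consZero n (diffZero n v) = fun i => v i - v 0 := by
  funext i
  refine Fin.cases ?_ (fun j => ?_) i <;> simp [consZero, diffZero]

theorem diffZero_subMin_consZero (w : Fin n → ℝ) :
    diffZero n (subMin (consZero n w)) = w := by
  funext j
  simp [consZero, diffZero, subMin]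

theorem lipschitzExtensorOf_sphere_iff_orthantSphere (e : E ≃L[ℝ] (Fin n → ℝ)) :
    LipschitzExtensorOf X (sphere (0 : E) 1) ↔
      LipschitzExtensorOf X (orthantSphere (Fin (n + 1))) := by
  let T : (Fin (n + 1) → ℝ) →L[ℝ] E := (e.symm : (Fin n → ℝ) →L[ℝ] E).comp (diffZero n)
  let R : E →L[ℝ] (Fin (n + 1) → ℝ) := (consZero n).comp (e : E →L[ℝ] (Fin n → ℝ))
  have hT : IsConeMap ‖T‖₊ T (orthantBoundary (Fin (n + 1))) univ :=
    ⟨T.lipschitz, fun c _ v => T.map_smul c v, mapsTo_univ _ _⟩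
  have hR : IsConeMap (2 * ‖R‖₊) (subMin ∘ R) univ (orthantBoundary (Fin (n + 1))) :=
    ⟨lipschitzWith_subMin.comp R.lipschitz,
      fun c hc v => by simp only [Function.comp_apply, map_smul, subMin_smul hc.le],
      fun v _ => subMin_mem_orthantBoundary (R v)⟩
  have hRT : InvOn (subMin ∘ R) T (orthantBoundary (Fin (n + 1))) univ := by
    refine ⟨fun v hv => ?_, fun w _ => ?_⟩
    · simp [T, R, consZero_diffZero, subMin_sub_const, subMin_of_mem_orthantBoundary hv]
    · simp [T, R, diffZero_subMin_consZero]
  have hP : ∀ c : ℝ, 0 < c → ∀ v ∈ orthantBoundary (Fin (n + 1)),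
      c • v ∈ orthantBoundary (Fin (n + 1)) := fun _ hc _ hv => smul_mem_orthantBoundary hc hv
  have hQ : ∀ c : ℝ, 0 < c → ∀ w ∈ (univ : Set E), c • w ∈ univ := fun _ _ _ _ => mem_univ _
  rw [← univ_inter (sphere (0 : E) 1)]
  exact ⟨hT.lipschitzExtensorOf_inter_sphere hR hRT hP hQ,
    hR.lipschitzExtensorOf_inter_sphere hT hRT.symm hQ hP⟩

end OrthantSphere

section Covers

variable {X ι : Type*} [PseudoMetricSpace X]

/-- Every `r`-ball lies in a member of the family `U`, so that `U` is a cover with Lebesgue number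
at least `r`. -/
def IsLebesgueCover (r : ℝ) (U : ι → Set X) : Prop := ∀ x, ∃ i, ball x r ⊆ U i

/-- Every `r`-Lebesgue cover indexed by `ι` has a `t * r`-Lebesgue shrinking, indexed by `ι`
as well, whose members have no point in common. This is the single-scale, indexed form of the
covering condition. -/
def HasLebesgueShrinkings (X ι : Type*) [PseudoMetricSpace X] (t : ℝ) : Prop :=
  ∀ r : ℝ, 0 < r → ∀ U : ι → Set X, IsLebesgueCover r U →
    ∃ V : ι → Set X, IsLebesgueCover (t * r) V ∧ (∀ i, V i ⊆ U i) ∧ ∀ x, ∃ i, x ∉ V i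

/-- The coordinates are the distances to the complements of the members of `U`, truncated at `r`
and rescaled to `[0, 1]`. Going through `thickenedIndicator` makes the coordinate of a member
`U i = univ` equal to `1`, whereas `infDist x ∅ = 0`. -/
noncomputable def coverMap {r : ℝ} (hr : 0 < r) (U : ι → Set X) (x : X) : ι → ℝ :=
  fun i => 1 - thickenedIndicator hr (U i)ᶜ x

section CoverMap

variable {r : ℝ} (hr : 0 < r) (U : ι → Set X)

theorem coverMap_nonneg (x : X) : 0 ≤ coverMap hr U x :=
  fun _ => sub_nonneg.2 (mod_cast thickenedIndicator_le_one hr _ x)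

theorem coverMap_le_one (x : X) (i : ι) : coverMap hr U x i ≤ 1 :=
  sub_le_self _ NNReal.zero_le_coe

variable {U}

theorem coverMap_of_notMem {x : X} {i : ι} (hx : x ∉ U i) : coverMap hr U x i = 0 := by
  simp [coverMap, thickenedIndicator_one hr (U i)ᶜ hx]

theorem coverMap_of_ball_subset {x : X} {i : ι} (hx : ball x r ⊆ U i) :
    coverMap hr U x i = 1 := by
  have hfar : x ∉ thickening r (U i)ᶜ := fun hmem => by
    obtain ⟨y, hy, hxy⟩ := mem_thickening_iff.1 hmem
    exact hy (hx (mem_ball'.2 hxy))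
  simp [coverMap, thickenedIndicator_zero hr (U i)ᶜ hfar]

variable [Fintype ι]

theorem norm_coverMap (hU : IsLebesgueCover r U) (x : X) : ‖coverMap hr U x‖ = 1 := by
  obtain ⟨i, hi⟩ := hU x
  refine le_antisymm ((pi_norm_le_iff_of_nonneg zero_le_one).2 fun j => ?_) ?_
  · exact (Real.norm_of_nonneg (coverMap_nonneg hr U x j)).trans_le (coverMap_le_one hr U x j)
  · simpa [coverMap_of_ball_subset hr hi] using norm_le_pi_norm (coverMap hr U x) i

theorem lipschitzWith_coe_thickenedIndicator (A : Set X) :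
    LipschitzWith r.toNNReal⁻¹ fun x => (thickenedIndicator hr A x : ℝ) :=
  lipschitzWith_thickenedIndicator hr A

variable (U) in
theorem lipschitzWith_coverMap : LipschitzWith r.toNNReal⁻¹ (coverMap hr U) :=
  lipschitzWith_pi fun i => ((LipschitzWith.const (1 : ℝ)).sub
    (lipschitzWith_coe_thickenedIndicator hr (U i)ᶜ)).weaken (zero_add _).le

end CoverMap

end Covers

section Necessity

variable {X ι : Type*} [MetricSpace X] [Fintype ι]

theorem LipschitzExtensorOf.exists_hasLebesgueShrinkings [Nontrivial ι]
    (h : LipschitzExtensorOf X (orthantSphere ι)) :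
    ∃ t : ℝ, 0 < t ∧ HasLebesgueShrinkings X ι t := by
  obtain ⟨C, hC, H⟩ := lipschitzExtensorOf_coe_iff.1 h
  refine ⟨(C : ℝ)⁻¹, by positivity, fun r hr U hU => ?_⟩
  let A : Set X := {x | ∃ i, coverMap hr U x i = 0}
  have hA : MapsTo (coverMap hr U) A (orthantSphere ι) := fun x hx =>
    ⟨⟨coverMap_nonneg hr U x, hx⟩, mem_sphere_zero_iff_norm.2 (norm_coverMap hr hU x)⟩
  obtain ⟨g, hg, hgS, hgA⟩ : ∃ g : X → ι → ℝ, LipschitzWith (C * r.toNNReal⁻¹) g ∧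
      (∀ x, g x ∈ orthantSphere ι) ∧ EqOn g (coverMap hr U) A := by
    rcases A.eq_empty_or_nonempty with hAe | hAne
    · obtain ⟨p, hp⟩ := orthantSphere_nonempty (ι := ι)
      exact ⟨fun _ => p, (LipschitzWith.const p).weaken zero_le, fun _ => hp,
        hAe ▸ eqOn_empty _ _⟩
    · exact H A hAne _ (by positivity) _ (lipschitzWith_coverMap hr U).lipschitzOnWith hA
  refine ⟨fun i => {x | 0 < g x i}, fun x => ?_, fun i x hx => ?_, fun x => ?_⟩
  · obtain ⟨i, hi⟩ := exists_apply_eq_norm_of_nonneg (hgS x).1.1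
    rw [mem_sphere_zero_iff_norm.1 (hgS x).2] at hi
    refine ⟨i, fun y hy => ?_⟩
    have hgxy : g x i - g y i < 1 := calc
      g x i - g y i ≤ C * r⁻¹ * dist x y := by
        simpa [hr.le] using apply_sub_apply_le_of_lipschitzWith hg x y i
      _ < C * r⁻¹ * ((C : ℝ)⁻¹ * r) := by gcongr; exact mem_ball'.1 hy
      _ = 1 := by field_simp
    change 0 < g y i
    linarith
  · by_contra hxU
    have hφ : coverMap hr U x i = 0 := coverMap_of_notMem hr hxU
    exact hx.ne' (hgA ⟨i, hφ⟩ ▸ hφ)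
  · obtain ⟨i, hi⟩ := (hgS x).1.2
    exact ⟨i, hi.not_gt⟩

end Necessity

section Gluing

variable {X ι : Type*} [PseudoMetricSpace X]

/-- The gluing of `v` and `w` with weight `a`. For vectors with entries in `[0, 1]` it is `v` at
`a = 1` and `w` at `a = 0`. Maxima and minima take the place of a convex combination in order to
preserve Lipschitz constants. -/
def glue (a : ℝ) (v w : ι → ℝ) : ι → ℝ := fun i => max (min (v i) a) (min (w i) (1 - a))

theorem glue_one {v w : ι → ℝ} (hv : v ∈ Icc 0 1) (hw : 0 ≤ w) : glue 1 v w = v := by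
  funext i
  have hvi : v i ≤ 1 := hv.2 i
  have hvi' : 0 ≤ v i := hv.1 i
  have hwi : 0 ≤ w i := hw i
  simp [glue, hvi, hvi', hwi]

theorem glue_mem_orthantBoundary {a : ℝ} {v w : ι → ℝ} (ha : a ∈ Icc 0 1) (hv : 0 ≤ v)
    (hvw : ∃ i, w i = 0 ∧ (v i = 0 ∨ a = 0)) : glue a v w ∈ orthantBoundary ι := by
  have ha1 : 0 ≤ 1 - a := sub_nonneg.2 ha.2
  refine ⟨fun i => le_max_of_le_left (le_min (hv i) ha.1), ?_⟩
  obtain ⟨i, hwi, hvi | ha0⟩ := hvw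
  · exact ⟨i, by simp [glue, hwi, hvi, ha.1, ha1]⟩
  · have hvi : 0 ≤ v i := hv i
    exact ⟨i, by simp [glue, hwi, ha0, hvi]⟩

theorem half_le_norm_glue [Fintype ι] {a : ℝ} {v w : ι → ℝ}
    (hv : 1 / 2 ≤ a → ∃ i, 1 / 2 ≤ v i) (hw : ∃ i, 1 / 2 ≤ w i) : 1 / 2 ≤ ‖glue a v w‖ := by
  obtain ⟨i, hi⟩ : ∃ i, 1 / 2 ≤ glue a v w i := by
    rcases le_or_gt (1 / 2) a with ha | ha
    · obtain ⟨i, hi⟩ := hv ha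
      exact ⟨i, le_max_of_le_left (le_min hi ha)⟩
    · obtain ⟨i, hi⟩ := hw
      exact ⟨i, le_max_of_le_right (le_min hi (by linarith))⟩
  exact hi.trans (apply_le_pi_norm (glue a v w) i)

theorem lipschitzWith_glue [Fintype ι] {a : X → ℝ} {v w : X → ι → ℝ} {K : ℝ≥0}
    (ha : LipschitzWith K a) (hv : LipschitzWith K v) (hw : LipschitzWith K w) :
    LipschitzWith K fun x => glue (a x) (v x) (w x) := by
  have h1a : LipschitzWith K fun x => 1 - a x :=
    ((LipschitzWith.const (1 : ℝ)).sub ha).weaken (zero_add K).le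
  have hvi (i : ι) : LipschitzWith K fun x => v x i :=
    ((LipschitzWith.eval i).comp hv).weaken (one_mul K).le
  have hwi (i : ι) : LipschitzWith K fun x => w x i :=
    ((LipschitzWith.eval i).comp hw).weaken (one_mul K).le
  exact lipschitzWith_pi fun i =>
    ((((hvi i).min ha).weaken (max_self K).le).max
      (((hwi i).min h1a).weaken (max_self K).le)).weaken (max_self K).le

theorem exists_glued_extension [Fintype ι] {A : Set X} {φ ψ : X → ι → ℝ} {K ρ : ℝ≥0}
    (hρ0 : 0 < ρ) (hρ : ρ⁻¹ ≤ K) (hφ : LipschitzWith K φ) (hψ : LipschitzWith K ψ)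
    (hφ0 : ∀ x, 0 ≤ φ x) (hψ0 : ∀ x, 0 ≤ ψ x) (hφA : ∀ x ∈ A, φ x ≤ 1)
    (hφ2 : ∀ x ∈ thickening ρ A, ∃ i, 1 / 2 ≤ φ x i) (hψ2 : ∀ x, ∃ i, 1 / 2 ≤ ψ x i)
    (hφψ : ∀ x, ∃ i, ψ x i = 0 ∧ (φ x i = 0 ∨ x ∉ thickening ρ A)) :
    ∃ g : X → ι → ℝ, LipschitzWith K g ∧ (∀ x, g x ∈ orthantBoundary ι) ∧
      (∀ x, 1 / 2 ≤ ‖g x‖) ∧ EqOn g φ A := by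
  let a : X → ℝ := fun x => thickenedIndicator (NNReal.coe_pos.2 hρ0) A x
  have ha : LipschitzWith K a :=
    (lipschitzWith_coe_thickenedIndicator _ A).weaken (by rwa [Real.toNNReal_coe])
  have ha01 (x : X) : a x ∈ Icc 0 1 :=
    ⟨NNReal.zero_le_coe, mod_cast thickenedIndicator_le_one _ A x⟩
  have ha0 {x : X} (hx : x ∉ thickening ρ A) : a x = 0 :=
    congrArg NNReal.toReal (thickenedIndicator_zero _ A hx)
  have ha1 {x : X} (hx : x ∈ A) : a x = 1 :=
    congrArg NNReal.toReal (thickenedIndicator_one _ A hx)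
  refine ⟨fun x => glue (a x) (φ x) (ψ x), lipschitzWith_glue ha hφ hψ, fun x => ?_,
    fun x => half_le_norm_glue (fun hax => hφ2 x ?_) (hψ2 x), fun x hx => ?_⟩
  · obtain ⟨i, hψi, hi⟩ := hφψ x
    exact glue_mem_orthantBoundary (ha01 x) (hφ0 x) ⟨i, hψi, hi.imp_right ha0⟩
  · by_contra hx
    linarith [ha0 hx]
  · change glue (a x) (φ x) (ψ x) = φ x
    rw [ha1 hx, glue_one ⟨hφ0 x, hφA x hx⟩ (hψ0 x)]

variable [Fintype ι] [Nonempty ι] {A : Set X} {φ : X → ι → ℝ} {L : ℝ≥0} {ρ : ℝ}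

theorem exists_half_le_apply_of_mem_thickening (hφ : LipschitzWith L φ) (hφ0 : ∀ x, 0 ≤ φ x)
    (hφA : ∀ a ∈ A, ‖φ a‖ = 1) (hρ : L * ρ ≤ 1 / 4) {x : X} (hx : x ∈ thickening (2 * ρ) A) :
    ∃ i, 1 / 2 ≤ φ x i := by
  obtain ⟨a, ha, hxa⟩ := mem_thickening_iff.1 hx
  obtain ⟨i, hi⟩ := exists_apply_eq_norm_of_nonneg (hφ0 a)
  have hax : φ a i - φ x i ≤ L * (2 * ρ) := calc
    φ a i - φ x i ≤ L * dist x a := dist_comm x a ▸ apply_sub_apply_le_of_lipschitzWith hφ a x i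
    _ ≤ L * (2 * ρ) := by gcongr
  exact ⟨i, by linarith [hφA a ha]⟩

theorem isLebesgueCover_pos_union_compl_thickening (hφ : LipschitzWith L φ)
    (hφ0 : ∀ x, 0 ≤ φ x) (hφA : ∀ a ∈ A, ‖φ a‖ = 1) (hρ : L * ρ ≤ 1 / 4) :
    IsLebesgueCover ρ fun i => {x | 0 < φ x i} ∪ (thickening ρ A)ᶜ := by
  intro x
  by_cases hx : x ∈ thickening (2 * ρ) A
  · obtain ⟨i, hi⟩ := exists_half_le_apply_of_mem_thickening hφ hφ0 hφA hρ hx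
    refine ⟨i, fun y hy => Or.inl ?_⟩
    have hxy : φ x i - φ y i ≤ L * ρ := calc
      φ x i - φ y i ≤ L * dist x y := apply_sub_apply_le_of_lipschitzWith hφ x y i
      _ ≤ L * ρ := by gcongr; exact (mem_ball'.1 hy).le
    change 0 < φ y i
    linarith
  · refine ⟨Classical.arbitrary ι, fun y hy => Or.inr fun hyA => hx ?_⟩
    obtain ⟨a, ha, hya⟩ := mem_thickening_iff.1 hyA
    refine mem_thickening_iff.2 ⟨a, ha, ?_⟩
    linarith [dist_triangle x y a, mem_ball'.1 hy]

end Gluing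

section Sufficiency

variable {X ι : Type*} [Fintype ι] [Nonempty ι] {t : ℝ≥0}

theorem HasLebesgueShrinkings.exists_common_zero [PseudoMetricSpace X]
    (h : HasLebesgueShrinkings X ι t) (ht : 0 < t) {A : Set X} {φ : X → ι → ℝ} {L ρ : ℝ≥0}
    (hφ : LipschitzWith L φ) (hφB : ∀ x, φ x ∈ orthantBoundary ι) (hφA : ∀ a ∈ A, ‖φ a‖ = 1)
    (hρ0 : 0 < ρ) (hρ : (L : ℝ) * ρ ≤ 1 / 4) :
    ∃ ψ : X → ι → ℝ, LipschitzWith (t * ρ)⁻¹ ψ ∧ (∀ x, 0 ≤ ψ x) ∧ (∀ x, ∃ i, ψ x i = 1) ∧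
      ∀ x, ∃ i, ψ x i = 0 ∧ (φ x i = 0 ∨ x ∉ thickening ρ A) := by
  obtain ⟨V, hV, hVU, hVx⟩ := h ρ hρ0 _
    (isLebesgueCover_pos_union_compl_thickening hφ (fun x => (hφB x).1) hφA hρ)
  have htρ : (0 : ℝ) < (t * ρ : ℝ≥0) := by positivity
  refine ⟨coverMap htρ V, (lipschitzWith_coverMap htρ V).weaken (by rw [Real.toNNReal_coe]),
    coverMap_nonneg htρ V, fun x => (hV x).imp fun _ => coverMap_of_ball_subset htρ, fun x => ?_⟩
  by_cases hx : x ∈ thickening ρ A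
  · obtain ⟨i, hi⟩ := (hφB x).2
    refine ⟨i, coverMap_of_notMem htρ fun hxV => ?_, Or.inl hi⟩
    exact (hVU i hxV).elim (fun hpos => hpos.ne' hi) fun hfar => hfar hx
  · obtain ⟨i, hi⟩ := hVx x
    exact ⟨i, coverMap_of_notMem htρ hi, Or.inr hx⟩

theorem HasLebesgueShrinkings.exists_extension_orthantBoundary [PseudoMetricSpace X]
    (h : HasLebesgueShrinkings X ι t) (ht : 0 < t) {A : Set X} {f : X → ι → ℝ} {K : ℝ≥0}
    (hK : 0 < K) (hf : LipschitzOnWith K f A) (hfA : MapsTo f A (orthantSphere ι)) :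
    ∃ g : X → ι → ℝ, LipschitzWith (8 * (1 + t⁻¹) * K) g ∧ (∀ x, g x ∈ orthantBoundary ι) ∧
      (∀ x, 1 / 2 ≤ ‖g x‖) ∧ EqOn g f A := by
  obtain ⟨φ, hφ, hφB, hφf⟩ :=
    exists_lipschitzWith_extension_orthantBoundary hf fun a ha => (hfA ha).1
  have hφ0 (x : X) : 0 ≤ φ x := (hφB x).1
  have hφA (a : X) (ha : a ∈ A) : ‖φ a‖ = 1 := hφf ha ▸ mem_sphere_zero_iff_norm.1 (hfA ha).2
  obtain ⟨ρ, hρ0, hρK⟩ : ∃ ρ : ℝ≥0, 0 < ρ ∧ ρ⁻¹ = 8 * K :=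
    ⟨(8 * K)⁻¹, by positivity, inv_inv _⟩
  have hρ : ((2 * K : ℝ≥0) : ℝ) * ρ ≤ 1 / 4 := by
    rw [← inv_inv ρ, hρK]; push_cast; field_simp; norm_num
  obtain ⟨ψ, hψ, hψ0, hψ1, hφψ⟩ := h.exists_common_zero ht hφ hφB hφA hρ0 hρ
  have h2 : 2 * K ≤ 8 * (1 + t⁻¹) * K := by
    gcongr
    exact le_mul_of_le_of_one_le (by norm_num) le_self_add
  have h8 : ρ⁻¹ ≤ 8 * (1 + t⁻¹) * K := by
    rw [hρK]
    gcongr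
    exact le_mul_of_one_le_right zero_le le_self_add
  have htρ : (t * ρ)⁻¹ ≤ 8 * (1 + t⁻¹) * K := by
    rw [mul_inv, hρK, ← mul_assoc, mul_comm t⁻¹]
    gcongr
    exact le_add_self
  obtain ⟨g, hg, hgB, hg2, hgφ⟩ := exists_glued_extension hρ0 h8 (hφ.weaken h2) (hψ.weaken htρ)
    hφ0 hψ0 (fun x hx i => (apply_le_pi_norm (φ x) i).trans_eq (hφA x hx))
    (fun x hx => exists_half_le_apply_of_mem_thickening hφ hφ0 hφA hρ
      (thickening_mono (by linarith [ρ.coe_nonneg]) A hx))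
    (fun x => (hψ1 x).imp fun i hi => by linarith) hφψ
  exact ⟨g, hg, hgB, hg2, hgφ.trans hφf⟩

theorem HasLebesgueShrinkings.lipschitzExtensorOf [MetricSpace X]
    (h : HasLebesgueShrinkings X ι t) (ht : 0 < t) :
    LipschitzExtensorOf X (orthantSphere ι) := by
  refine lipschitzExtensorOf_coe_iff.2 ⟨32 * (1 + t⁻¹), by positivity,
    fun A _ K hK f hf hfA => ?_⟩
  obtain ⟨g, hg, hgB, hg2, hgf⟩ := h.exists_extension_orthantBoundary ht hK hf hfA
  have hg0 (x : X) : g x ≠ 0 := norm_pos_iff.1 (one_half_pos.trans_le (hg2 x))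
  have hnorm : LipschitzOnWith (2 * 2 * (8 * (1 + t⁻¹) * K)) (fun x => normalize (g x)) univ :=
    lipschitzOnWith_normalize_comp hg.lipschitzOnWith fun x _ => by
      rw [NNReal.coe_ofNat]
      linarith [hg2 x]
  refine ⟨fun x => normalize (g x), (lipschitzOnWith_univ.1 hnorm).weaken (by ring_nf; rfl),
    fun x => normalize_mem_orthantSphere (hgB x) (hg0 x), fun a ha => ?_⟩
  simp only [hgf ha, normalize_eq_self_of_norm_eq_one (mem_sphere_zero_iff_norm.1 (hfA ha).2)]

end Sufficiency

section Refinements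

variable {X ι : Type*} [MetricSpace X]

theorem multiplicityLE_iff_encard_le {V : Set (Set X)} {n : ℕ} :
    MultiplicityLE V n ↔ ∀ x, {W | W ∈ V ∧ x ∈ interior W}.encard ≤ n :=
  forall_congr' fun _ => encard_le_coe_iff_finite_ncard_le.symm

theorem MultiplicityLE.mono {V : Set (Set X)} {k n : ℕ} (hV : MultiplicityLE V k) (hkn : k ≤ n) :
    MultiplicityLE V n :=
  fun x => ⟨(hV x).1, (hV x).2.trans hkn⟩

theorem multiplicityLE_one_of_pairwiseDisjoint {V : Set (Set X)} (hV : V.PairwiseDisjoint id) :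
    MultiplicityLE V 1 :=
  multiplicityLE_iff_encard_le.2 fun x => encard_le_one_iff.2 fun _ _ hW hW' =>
    hV.elim hW.1 hW'.1
      (not_disjoint_iff.2 ⟨x, interior_subset hW.2, interior_subset hW'.2⟩)

theorem multiplicityLE_range [Fintype ι] {V : ι → Set X} {n : ℕ} (hV : ∀ x, ∃ i, x ∉ V i)
    (hn : Fintype.card ι ≤ n + 1) : MultiplicityLE (range V) n := by
  classical
  refine multiplicityLE_iff_encard_le.2 fun x => ?_
  obtain ⟨i, hi⟩ := hV x
  have hsub : {W | W ∈ range V ∧ x ∈ interior W} ⊆ V '' ↑({i}ᶜ : Finset ι) := by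
    rintro _ ⟨⟨j, rfl⟩, hxj⟩
    refine mem_image_of_mem V ?_
    simpa using fun hji : j = i => hi (hji ▸ interior_subset hxj)
  refine (encard_le_encard hsub).trans ((encard_image_le _ _).trans ?_)
  rw [encard_coe_eq_coe_finsetCard, Finset.card_compl, Finset.card_singleton]
  exact_mod_cast Nat.sub_le_of_le_add hn

theorem MultiplicityLE.exists_shrinking [Fintype ι] {V : Set (Set X)} {U : ι → Set X} {n : ℕ}
    (hV : MultiplicityLE V n) (hVU : ∀ W ∈ V, ∃ i, W ⊆ U i) (hn : n < Fintype.card ι) :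
    ∃ V' : ι → Set X, (∀ W ∈ V, ∃ i, interior W ⊆ V' i) ∧ (∀ i, V' i ⊆ U i) ∧
      ∀ x, ∃ i, x ∉ V' i := by
  have : Nonempty ι := Fintype.card_pos_iff.1 (n.zero_le.trans_lt hn)
  choose! idx hidx using hVU
  refine ⟨fun i => {x | ∃ W ∈ V, idx W = i ∧ x ∈ interior W},
    fun W hW => ⟨idx W, fun x hx => ⟨W, hW, rfl, hx⟩⟩, ?_, fun x => ?_⟩
  · rintro _ x ⟨W, hW, rfl, hx⟩
    exact hidx W hW (interior_subset hx)
  · by_contra! hx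
    choose W hWV hWi hxW using hx
    have hinj : Function.Injective W := (show Function.LeftInverse idx W from hWi).injective
    have hcard : (Fintype.card ι : ℕ∞) ≤ n := calc
      (Fintype.card ι : ℕ∞) = (range W).encard := by simp [← image_univ, hinj.encard_image]
      _ ≤ {W | W ∈ V ∧ x ∈ interior W}.encard :=
        encard_le_encard (range_subset_iff.2 fun i => ⟨hWV i, hxW i⟩)
      _ ≤ n := multiplicityLE_iff_encard_le.1 hV x
    exact hn.not_ge (mod_cast hcard)

theorem exists_eq_univ_of_not_bddAbove [Finite ι] [Nonempty ι] {U : ι → Set X}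
    (hU : ¬BddAbove {r | IsLebesgueCover r U}) : ∃ i, U i = univ := by
  by_contra! hne
  choose y hy using fun i => (ne_univ_iff_exists_notMem (U i)).1 (hne i)
  let x := y (Classical.arbitrary ι)
  obtain ⟨R, hR⟩ := (finite_range fun i => dist (y i) x).bddAbove
  obtain ⟨r, hr, hRr⟩ := not_bddAbove_iff.1 hU R
  obtain ⟨i, hi⟩ := hr x
  exact hy i (hi ((hR (mem_range_self i)).trans_lt hRr))

/-- `V` is a cover refining `U`, of multiplicity at most `n`, whose Lebesgue number is at least
`t` times that of `U`. The Lebesgue numbers are compared through the radii `r` for which `U` is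
`r`-Lebesgue. -/
def IsThinRefinement (t : ℝ) (n : ℕ) (U : ι → Set X) (V : Set (Set X)) : Prop :=
  (∀ x, ∃ W ∈ V, x ∈ W) ∧ (∀ W ∈ V, ∃ i, W ⊆ U i) ∧ MultiplicityLE V n ∧
    ∀ r : ℝ, 0 < r → IsLebesgueCover r U → ∀ x, ∃ W ∈ V, ball x (t * r) ⊆ W

variable {U : ι → Set X} {n : ℕ} {t : ℝ}

theorem isThinRefinement_singletons (hU : ∀ x, ∃ i, x ∈ U i) (hn : 1 ≤ n)
    (hr : ∀ r : ℝ, 0 < r → ¬IsLebesgueCover r U) :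
    IsThinRefinement t n U (range singleton) := by
  refine ⟨fun x => ⟨{x}, mem_range_self x, rfl⟩, ?_,
    (multiplicityLE_one_of_pairwiseDisjoint pairwiseDisjoint_range_singleton).mono hn,
    fun r hr0 hrU => absurd hrU (hr r hr0)⟩
  rintro _ ⟨x, rfl⟩
  exact (hU x).imp fun _ => singleton_subset_iff.2

theorem isThinRefinement_singleton_univ (hU : ∃ i, U i = univ) (hn : 1 ≤ n) :
    IsThinRefinement t n U {univ} :=
  ⟨fun _ => ⟨univ, rfl, mem_univ _⟩, fun _ _ => hU.imp fun _ hi => (subset_univ _).trans_eq hi.symm,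
    (multiplicityLE_one_of_pairwiseDisjoint (pairwiseDisjoint_singleton _ _)).mono hn,
    fun _ _ _ _ => ⟨univ, rfl, subset_univ _⟩⟩

variable [Fintype ι]

theorem HasLebesgueShrinkings.exists_isThinRefinement_of_bddAbove (h : HasLebesgueShrinkings X ι t)
    (ht : 0 < t) (hn : Fintype.card ι ≤ n + 1) {r : ℝ} (hr : 0 < r) (hrU : IsLebesgueCover r U)
    (hU : BddAbove {r | IsLebesgueCover r U}) : ∃ V, IsThinRefinement (t / 2) n U V := by
  have hsup : 0 < sSup {r | IsLebesgueCover r U} := hr.trans_le (le_csSup hU hrU)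
  obtain ⟨s, hs, hs2⟩ := exists_lt_of_lt_csSup ⟨r, hrU⟩ (half_lt_self hsup)
  have hs0 : 0 < s := (half_pos hsup).trans hs2
  obtain ⟨V, hV, hVU, hVx⟩ := h s hs0 U hs
  refine ⟨range V, fun x => ?_, ?_, multiplicityLE_range hVx hn, fun r' _ hr' x => ?_⟩
  · obtain ⟨i, hi⟩ := hV x
    exact ⟨V i, mem_range_self i, hi (mem_ball_self (by positivity))⟩
  · rintro _ ⟨i, rfl⟩
    exact ⟨i, hVU i⟩
  · obtain ⟨i, hi⟩ := hV x
    have hr's : t / 2 * r' ≤ t * s := by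
      have := le_csSup hU hr'
      nlinarith
    exact ⟨V i, mem_range_self i, (ball_subset_ball hr's).trans hi⟩

theorem HasLebesgueShrinkings.exists_isThinRefinement [Nonempty ι]
    (h : HasLebesgueShrinkings X ι t) (ht : 0 < t) (hn : 1 ≤ n) (hιn : Fintype.card ι ≤ n + 1)
    (hU : ∀ x, ∃ i, x ∈ U i) : ∃ V, IsThinRefinement (t / 2) n U V := by
  by_cases hLeb : ∃ r : ℝ, 0 < r ∧ IsLebesgueCover r U
  · obtain ⟨r, hr, hrU⟩ := hLeb
    by_cases hbdd : BddAbove {r | IsLebesgueCover r U}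
    · exact h.exists_isThinRefinement_of_bddAbove ht hιn hr hrU hbdd
    · exact ⟨_, isThinRefinement_singleton_univ (exists_eq_univ_of_not_bddAbove hbdd) hn⟩
  · exact ⟨_, isThinRefinement_singletons hU hn fun r hr hrU => hLeb ⟨r, hr, hrU⟩⟩

theorem hasLebesgueShrinkings_of_exists_isThinRefinement (hn : n < Fintype.card ι)
    (H : ∀ U : ι → Set X, (∀ x, ∃ i, x ∈ U i) → ∃ V, IsThinRefinement t n U V) :
    HasLebesgueShrinkings X ι t := by
  intro r hr U hU
  obtain ⟨V, -, hVU, hVn, hVr⟩ := H U fun x => (hU x).imp fun i hi => hi (mem_ball_self hr)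
  obtain ⟨V', hVV', hV'U, hV'⟩ := hVn.exists_shrinking hVU hn
  refine ⟨V', fun x => ?_, hV'U, hV'⟩
  obtain ⟨W, hW, hxW⟩ := hVr r hr hU x
  exact (hVV' W hW).imp fun i => (interior_maximal hxW isOpen_ball).trans

end Refinements

theorem sphere_extensor_iff_cover_refinement_general {X E : Type*} [MetricSpace X]
    [NormedAddCommGroup E] [NormedSpace ℝ E] (m : ℕ) (hE : Module.finrank ℝ E = m + 1) :
    LipschitzExtensorOf X (sphere (0 : E) 1) ↔
      ∃ t : ℝ, 0 < t ∧ ∀ U : Fin (m + 2) → Set X, (∀ x, ∃ i, x ∈ U i) →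
        ∃ V : Set (Set X), IsThinRefinement t (m + 1) U V := by
  have : FiniteDimensional ℝ E := Module.finite_of_finrank_eq_succ hE
  have e : E ≃L[ℝ] (Fin (m + 1) → ℝ) :=
    ContinuousLinearEquiv.ofFinrankEq (by rw [hE, Module.finrank_fin_fun])
  rw [lipschitzExtensorOf_sphere_iff_orthantSphere e]
  constructor
  · intro hX
    obtain ⟨t, ht, h⟩ := hX.exists_hasLebesgueShrinkings
    exact ⟨t / 2, half_pos ht, fun U => h.exists_isThinRefinement ht (by simp) (by simp)⟩
  · rintro ⟨t, ht, H⟩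
    lift t to ℝ≥0 using ht.le
    have h : HasLebesgueShrinkings X (Fin (m + 2)) t :=
      hasLebesgueShrinkings_of_exists_isThinRefinement (n := m + 1) (by simp) H
    exact h.lipschitzExtensorOf (mod_cast ht)

theorem sphere_extensor_iff_cover_refinement
    {X : Type*} [MetricSpace X] (m : ℕ) :
    LipschitzExtensorOf X (Metric.sphere (0 : EuclideanSpace ℝ (Fin (m + 1))) 1) ↔
      ∃ t : ℝ, 0 < t ∧ ∀ U : Fin (m + 2) → Set X, (∀ x : X, ∃ i, x ∈ U i) →
        ∃ V : Set (Set X),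
          (∀ x : X, ∃ W ∈ V, x ∈ W) ∧
          (∀ W ∈ V, ∃ i, W ⊆ U i) ∧
          MultiplicityLE V (m + 1) ∧
          ∀ r : ℝ, 0 < r → (∀ x : X, ∃ i, Metric.ball x r ⊆ U i) →
            ∀ x : X, ∃ W ∈ V, Metric.ball x (t * r) ⊆ W :=
  sphere_extensor_iff_cover_refinement_general m finrank_euclideanSpace_fin
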